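/- Let g ≥ 2 and let a, b ∈ Γ_g be two elements with ab ≠ ba. Then there exists a group homomorphism φ from Γ_g to the free group F₂ on two generators such that φ(a)φ(b) ≠ φ(b)φ(a). -/

import Mathlib

open scoped commutatorElement

/-- The relator `[a₁,b₁][a₂,b₂]⋯[a_g,b_g]` of the genus-`g` surface group;
`(i, false)` is the generator `aᵢ` and `(i, true)` is `bᵢ`. -/
def surfaceRelator (g : ℕ) : FreeGroup (Fin g × Bool) :=
  (List.ofFn fun i : Fin g =>
    ⁅FreeGroup.of (i, false), FreeGroup.of (i, true)⁆).prod

/-- The surface group `Γ_g` of genus `g`. -/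
abbrev SurfaceGroup (g : ℕ) : Type :=
  PresentedGroup ({surfaceRelator g} : Set (FreeGroup (Fin g × Bool)))

/-!
The separating curve `c` of the genus two surface writes `Γ₂` as the double `F *_{⟨c⟩} F` of a free
group `F` of rank two along `c = [x, y]`. Conjugating the second copy of `F` by a power of `c²`
before folding both copies onto `F` gives homomorphisms `Γ₂ → F`, and every `γ ≠ 1` survives in one
of them. To see this, let `ρ : F → GL₂(ℤ)` be the holonomy of a punctured torus, in which `c²` is a
unipotent upper triangular matrix and `⟨c⟩` is the whole stabilizer of the cusp `∞`. Conjugating the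
second copy of `ρ` by the generic unipotent matrix with entry `tX` represents `Γ₂` over `ℤ[X]`, and
by comparing degrees the lower left entry of the image of an element `γ ∉ ⟨c⟩` is a nonzero
polynomial. Some integer `n` is not a root of it, and specializing `X` to `n` yields the composition
of `ρ` with the fold that is twisted by `c²ⁿ`. Finally, `Γ_g` for `g ≥ 2` embeds into `Γ₂` as the
fundamental group of a cyclic covering of degree `g - 1`: the regular action of `Γ_g` extends to an
action of `Γ₂` on `g - 1` copies of `Γ_g`.
-/

noncomputable section

open Matrix.GeneralLinearGroup Monoid
open Polynomial hiding map

section UpperRight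

variable {R : Type*} [CommRing R]

lemma mul_apply_fin_two (M N : GL (Fin 2) R) (i j : Fin 2) :
    (M * N) i j = M i 0 * N 0 j + M i 1 * N 1 j := by
  rw [Matrix.GeneralLinearGroup.coe_mul, Matrix.mul_apply, Fin.sum_univ_two]

lemma commute_upperRightHom {M : GL (Fin 2) R} (h₁₀ : M 1 0 = 0) (h₀₀ : M 0 0 = M 1 1) (t : R) :
    Commute M (upperRightHom t) := by
  ext i j
  fin_cases i <;> fin_cases j <;> simp [mul_apply_fin_two, h₁₀, h₀₀, add_comm, mul_comm]

lemma commute_upperRightHom_iff [NoZeroDivisors R] {M : GL (Fin 2) R} {t : R} (ht : t ≠ 0) :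
    Commute M (upperRightHom t) ↔ M 1 0 = 0 ∧ M 0 0 = M 1 1 := by
  refine ⟨fun h => ?_, fun h => commute_upperRightHom h.1 h.2 t⟩
  have h₁₀ : M 1 0 = 0 := by
    simpa [mul_apply_fin_two, ht] using congrArg (· 0 0) h.eq
  have h₀₁ : M 0 0 * t + M 0 1 = M 0 1 + t * M 1 1 := by
    simpa [mul_apply_fin_two] using congrArg (· 0 1) h.eq
  exact ⟨h₁₀, mul_right_cancel₀ ht (by linear_combination h₀₁)⟩

lemma upperRightHom_mul_apply_zero (t : R) (M : GL (Fin 2) R) (j : Fin 2) :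
    (upperRightHom t * M) 0 j = M 0 j + t * M 1 j := by
  simp [mul_apply_fin_two]

lemma upperRightHom_mul_apply_one (t : R) (M : GL (Fin 2) R) (j : Fin 2) :
    (upperRightHom t * M) 1 j = M 1 j := by
  simp [mul_apply_fin_two]

lemma apply_one_one_ne_zero [Nontrivial R] {M : GL (Fin 2) R} (h₁₀ : M 1 0 = 0) : M 1 1 ≠ 0 := by
  intro h₁₁
  simpa [h₁₀, h₁₁] using mul_apply_fin_two M M⁻¹ 1 1

end UpperRight

/-- The first column of a polynomial matrix has its upper entry of larger degree than its lower
entry. -/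
def DegDominant {R : Type*} [CommRing R] (M : GL (Fin 2) R[X]) : Prop :=
  (M 1 0).degree < (M 0 0).degree

namespace DegDominant

variable {R : Type*} [CommRing R] [IsDomain R] {M : GL (Fin 2) R[X]} {g : GL (Fin 2) R}

lemma degree_map_C_mul (hM : DegDominant M) (hg : g 1 0 ≠ 0) :
    ((map C g * M) 1 0).degree = (M 0 0).degree := by
  rw [mul_apply_fin_two, Matrix.GeneralLinearGroup.map_apply, Matrix.GeneralLinearGroup.map_apply,
    degree_add_eq_left_of_degree_lt, degree_C_mul hg]
  rw [degree_C_mul hg, C_mul']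
  exact (degree_smul_le _ _).trans_lt hM

lemma map_C_mul_ne_zero (hM : DegDominant M) (hg : g 1 0 ≠ 0) : (map C g * M) 1 0 ≠ 0 := by
  rw [← degree_ne_bot, hM.degree_map_C_mul hg]
  exact (bot_le.trans_lt hM).ne'

lemma upperRightHom_mul_map_C_mul (hM : DegDominant M) (hg : g 1 0 ≠ 0) {m : R} (hm : m ≠ 0) :
    DegDominant (upperRightHom (C m * X) * (map C g * M)) := by
  have hdeg := hM.degree_map_C_mul hg
  have hne := hM.map_C_mul_ne_zero hg
  have hupper : ((map C g * M) 0 0).degree ≤ ((map C g * M) 1 0).degree := by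
    rw [hdeg, mul_apply_fin_two, Matrix.GeneralLinearGroup.map_apply,
      Matrix.GeneralLinearGroup.map_apply, C_mul', C_mul']
    exact (degree_add_le _ _).trans
      (max_le (degree_smul_le _ _) ((degree_smul_le _ _).trans hM.le))
  set N := map C g * M
  have hlt : (N 1 0).degree < (C m * X * N 1 0).degree := by
    rw [degree_mul, degree_C_mul_X hm, degree_eq_natDegree hne]
    norm_cast
    lia
  simp only [DegDominant, upperRightHom_mul_apply_zero, upperRightHom_mul_apply_one]
  rwa [degree_add_eq_right_of_degree_lt (hupper.trans_lt hlt)]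

end DegDominant

section Amalgam

variable {F G K ι : Type*} [Group F] [Group G] [Group K] {H : Subgroup F}

variable (ι H) in
/-- The amalgam of copies of `F`, indexed by `ι`, along the common subgroup `H`. -/
abbrev CopyAmalgam : Type _ := PushoutI fun _ : ι => H.subtype

namespace CopyAmalgam

lemma of_eq_of {u : F} (hu : u ∈ H) (i j : ι) :
    (PushoutI.of i u : CopyAmalgam ι H) = PushoutI.of j u :=
  (PushoutI.of_apply_eq_base (fun _ => H.subtype) i ⟨u, hu⟩).trans
    (PushoutI.of_apply_eq_base (fun _ => H.subtype) j ⟨u, hu⟩).symm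

/-- The bending of `ρ` along `H`: on the `i`-th copy of `F` it is the conjugate of `ρ` by `τ i`,
which centralizes `ρ H`. -/
def bend (ρ : F →* G) (τ : ι → G) (hτ : ∀ i, ∀ h ∈ H, Commute (τ i) (ρ h)) :
    CopyAmalgam ι H →* G :=
  PushoutI.lift (fun i => (MulAut.conj (τ i)).toMonoidHom.comp ρ) (ρ.comp H.subtype) fun i => by
    ext h
    simpa using (hτ i h h.2).mul_inv_cancel

section

variable (ρ : F →* G) (τ : ι → G) (hτ : ∀ i, ∀ h ∈ H, Commute (τ i) (ρ h))

@[simp]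
lemma bend_of (i : ι) (u : F) :
    bend ρ τ hτ (PushoutI.of i u) = τ i * ρ u * (τ i)⁻¹ := by
  simp [bend]

@[simp]
lemma bend_base (h : H) : bend ρ τ hτ (PushoutI.base _ h) = ρ h := by
  simp [bend]

lemma comp_bend (f : G →* K) :
    f.comp (bend ρ τ hτ) =
      bend (f.comp ρ) (f ∘ τ) fun i h hh => (hτ i h hh).map f := by
  apply PushoutI.hom_ext
  · intro i
    ext u
    simp
  · ext h
    simp

end

theorem exists_base_mul_reduced_eq (x : CopyAmalgam ι H) :
    ∃ (h : H) (w : CoprodI.Word fun _ : ι => F), PushoutI.Reduced (fun _ => H.subtype) w ∧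
      PushoutI.base _ h * PushoutI.ofCoprodI w.prod = x := by
  classical
  obtain ⟨d⟩ := PushoutI.NormalWord.transversal_nonempty (fun _ : ι => H.subtype)
    fun _ => H.subtype_injective
  obtain ⟨w, rfl⟩ := (PushoutI.NormalWord.equiv (d := d)).symm.surjective x
  refine ⟨w.head, w.toWord, ?_, rfl⟩
  rintro ⟨i, u⟩ hu
  have hud := w.normalized i u hu
  rw [← SetLike.mem_coe, ← (d.compl i).coe_equiv_snd_eq_one_iff_mem (d.one_mem i),
    ((d.compl i).equiv_snd_eq_self_iff_mem (one_mem _)).2 hud]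
  exact w.ne_one _ hu

section Polynomial

variable {R : Type*} [CommRing R] {ρ : F →* GL (Fin 2) R}

/-- The bending of `ρ` along `H` in which the angle of the `i`-th copy is the generic multiple
`m i * X` of a unipotent one-parameter group centralizing `ρ H`. -/
def polyBend (hH : ∀ h ∈ H, ρ h 1 0 = 0 ∧ ρ h 0 0 = ρ h 1 1) (m : ι → R) :
    CopyAmalgam ι H →* GL (Fin 2) R[X] :=
  bend ((map C).comp ρ) (fun i => upperRightHom (C (m i) * X)) fun _ h hh =>
    (commute_upperRightHom (by simp [hH h hh]) (by simp [hH h hh]) _).symm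

lemma map_evalRingHom_comp_polyBend (hH : ∀ h ∈ H, ρ h 1 0 = 0 ∧ ρ h 0 0 = ρ h 1 1) (m : ι → R)
    (r : R) :
    (map (evalRingHom r)).comp (polyBend hH m) =
      bend ρ (fun i => upperRightHom (m i * r)) fun _ h hh =>
        (commute_upperRightHom (hH h hh).1 (hH h hh).2 _).symm := by
  rw [polyBend, comp_bend]
  congr 1
  · ext u : 1
    ext a b
    simp
  · ext i a b
    fin_cases a <;> fin_cases b <;> simp

lemma polyBend_ofCoprodI_cons (hH : ∀ h ∈ H, ρ h 1 0 = 0 ∧ ρ h 0 0 = ρ h 1 1) (m : ι → R) {i : ι}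
    {u : F} {w : CoprodI.Word fun _ : ι => F} (hi : w.fstIdx ≠ some i) (hu : u ≠ 1) :
    polyBend hH m (PushoutI.ofCoprodI (w.cons u hi hu).prod) = upperRightHom (C (m i) * X) *
      (map C (ρ u) *
        ((upperRightHom (C (m i) * X))⁻¹ * polyBend hH m (PushoutI.ofCoprodI w.prod))) := by
  simp [polyBend, mul_assoc]

variable [IsDomain R] {m : ι → R}

lemma degDominant_polyBend (hH : ∀ h ∈ H, ρ h 1 0 = 0 ∧ ρ h 0 0 = ρ h 1 1)
    (hρ : ∀ u, ρ u 1 0 = 0 → u ∈ H) (hm : m.Injective) {w : CoprodI.Word fun _ : ι => F}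
    (hw : PushoutI.Reduced (fun _ => H.subtype) w) {i : ι} (hi : w.fstIdx ≠ some i) :
    DegDominant
      ((upperRightHom (C (m i) * X))⁻¹ * polyBend hH m (PushoutI.ofCoprodI w.prod)) := by
  induction w using CoprodI.Word.consRecOn generalizing i with
  | empty => simp [DegDominant]
  | cons j u w hj hu ih =>
    have hu₁₀ : ρ u 1 0 ≠ 0 := fun h =>
      hw ⟨j, u⟩ (by simp [CoprodI.Word.cons]) (by simpa using hρ u h)
    have hij : m j - m i ≠ 0 := sub_ne_zero.2 (hm.ne (by simpa using hi))
    rw [polyBend_ofCoprodI_cons, ← mul_assoc, ← AddChar.map_neg_eq_inv, ← AddChar.map_add_eq_mul,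
      show -(C (m i) * X) + C (m j) * X = C (m j - m i) * X by rw [C_sub]; ring]
    exact (ih (fun l hl => hw l (by simp [CoprodI.Word.cons, hl])) hj).upperRightHom_mul_map_C_mul
      hu₁₀ hij

lemma polyBend_apply_one_zero_ne_zero (hH : ∀ h ∈ H, ρ h 1 0 = 0 ∧ ρ h 0 0 = ρ h 1 1)
    (hρ : ∀ u, ρ u 1 0 = 0 → u ∈ H) (hm : m.Injective) {x : CopyAmalgam ι H}
    (hx : x ∉ (PushoutI.base fun _ : ι => H.subtype).range) : polyBend hH m x 1 0 ≠ 0 := by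
  obtain ⟨h, w, hw, rfl⟩ := exists_base_mul_reduced_eq x
  have hρh : ρ h 1 1 ≠ 0 := apply_one_one_ne_zero (hH h h.2).1
  induction w using CoprodI.Word.consRecOn with
  | empty => simp at hx
  | cons i u w hi hu =>
    have hdom := degDominant_polyBend hH hρ hm
      (fun l hl => hw l (by simp [CoprodI.Word.cons, hl])) hi
    have hu₁₀ : ρ u 1 0 ≠ 0 := fun h =>
      hw ⟨i, u⟩ (by simp [CoprodI.Word.cons]) (by simpa using hρ u h)
    have hbase : polyBend hH m (PushoutI.base _ h) = map C (ρ h) := by simp [polyBend]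
    rw [map_mul, hbase, mul_apply_fin_two, polyBend_ofCoprodI_cons, upperRightHom_mul_apply_one]
    simpa [(hH h h.2).1, hρh] using hdom.map_C_mul_ne_zero hu₁₀

theorem exists_hom_ne_one [CharZero R] [Countable ι] {z : F} (hz : ∀ h ∈ H, Commute z h) {t : R}
    (ht : t ≠ 0) (hρz : ρ z = upperRightHom t) (hρ : ∀ u, ρ u 1 0 = 0 → u ∈ H)
    {x : CopyAmalgam ι H} (hx : x ≠ 1) : ∃ φ : CopyAmalgam ι H →* F, φ x ≠ 1 := by
  obtain ⟨k, hk⟩ := exists_injective_nat ι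
  let twist (n : ℕ) : CopyAmalgam ι H →* F :=
    bend (MonoidHom.id F) (fun i => z ^ (n * k i)) fun _ h hh => (hz h hh).pow_left _
  by_cases hbase : x ∈ (PushoutI.base fun _ : ι => H.subtype).range
  · obtain ⟨h, rfl⟩ := hbase
    refine ⟨twist 0, fun h_one => hx ?_⟩
    rw [show h = 1 from Subtype.ext (by simpa [twist] using h_one), map_one]
  have hH : ∀ h ∈ H, ρ h 1 0 = 0 ∧ ρ h 0 0 = ρ h 1 1 := fun h hh =>
    (commute_upperRightHom_iff ht).1 (by simpa only [hρz] using ((hz h hh).map ρ).symm)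
  have hm : (fun i => t * (k i : R)).Injective := fun i j hij => hk (by simpa [ht] using hij)
  obtain ⟨n, hn⟩ : ∃ n : ℕ, (polyBend hH (fun i => t * k i) x 1 0).eval (n : R) ≠ 0 := by
    by_contra! h
    exact polyBend_apply_one_zero_ne_zero hH hρ hm hbase (eq_zero_of_infinite_isRoot _
      ((Set.infinite_range_of_injective Nat.cast_injective).mono (Set.range_subset_iff.2 h)))
  have hspec :
      (map (evalRingHom (n : R))).comp (polyBend hH fun i => t * k i) = ρ.comp (twist n) := by
    rw [map_evalRingHom_comp_polyBend, comp_bend]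
    congr 1
    ext i : 1
    rw [Function.comp_apply, map_pow, hρz, ← AddChar.map_nsmul_eq_pow, nsmul_eq_mul]
    push_cast
    ring_nf
  refine ⟨twist n, fun h_one => hn ?_⟩
  simpa [h_one] using congrArg (· 1 0) (DFunLike.congr_fun hspec x)

end Polynomial

end CopyAmalgam

end Amalgam

open FreeGroup hiding map map_mul map_inv map_one

section Torus

open scoped Matrix

/-- The holonomy of a once-punctured hyperbolic torus, which is parabolic along the boundary
commutator. -/
def torusRep : FreeGroup (Fin 2) →* GL (Fin 2) ℤ :=
  FreeGroup.lift ![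
    ⟨!![2, 1; 1, 1], !![1, -1; -1, 2], by decide, by decide⟩,
    ⟨!![2, -1; -1, 1], !![1, 1; 1, 2], by decide, by decide⟩]

/-- The boundary curve of the once-punctured torus. -/
abbrev torusBoundary : FreeGroup (Fin 2) := ⁅of (0 : Fin 2), of 1⁆

/-- A primitive vector spanning the cusp to which `u` moves the cusp `∞` of `torusRep`. -/
def cuspVector (u : FreeGroup (Fin 2)) : Fin 2 → ℤ :=
  (torusRep u).1 *ᵥ ![1, 0]

lemma cuspVector_mul (u v : FreeGroup (Fin 2)) :
    cuspVector (u * v) = (torusRep u).1 *ᵥ cuspVector v := by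
  simp only [cuspVector, map_mul, Units.val_mul, Matrix.mulVec_mulVec]

lemma cuspVector_apply_one (u : FreeGroup (Fin 2)) : cuspVector u 1 = torusRep u 1 0 := by
  simp [cuspVector]

/-- The open arcs into which the vertices `(1, 0)`, `(1, 1)`, `(0, 1)`, `(1, -1)` of an ideal
fundamental quadrilateral of `torusRep` cut the projective line: the letter `l` maps every arc
except that of `l⁻¹` into its own. The predicate concerns the line spanned by `v`. -/
def InArc : Fin 2 × Bool → (Fin 2 → ℤ) → Prop
  | (0, true), v => 0 < v 1 ∧ v 1 < v 0 ∨ v 0 < v 1 ∧ v 1 < 0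
  | (1, true), v => v 1 < 0 ∧ -v 1 < v 0 ∨ 0 < v 1 ∧ v 0 < -v 1
  | (1, false), v => 0 < v 0 ∧ v 0 < v 1 ∨ v 1 < v 0 ∧ v 0 < 0
  | (0, false), v => v 0 < 0 ∧ -v 0 < v 1 ∨ 0 < v 0 ∧ v 1 < -v 0

instance (l : Fin 2 × Bool) (v : Fin 2 → ℤ) : Decidable (InArc l v) := by
  unfold InArc
  split <;> infer_instance

lemma InArc.apply_one_ne_zero {l : Fin 2 × Bool} {v : Fin 2 → ℤ} (h : InArc l v) : v 1 ≠ 0 := by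
  obtain ⟨i, b⟩ := l
  fin_cases i <;> cases b <;> simp only [InArc] at h <;> lia

lemma InArc.neg {l : Fin 2 × Bool} {v : Fin 2 → ℤ} (h : InArc l v) : InArc l (-v) := by
  obtain ⟨i, b⟩ := l
  fin_cases i <;> cases b <;> simp only [InArc, Pi.neg_apply] at h ⊢ <;> lia

lemma torusRep_letter_mulVec (v : Fin 2 → ℤ) :
    (torusRep (mk [(0, true)])).1 *ᵥ v = ![2 * v 0 + v 1, v 0 + v 1] ∧
      (torusRep (mk [(0, false)])).1 *ᵥ v = ![v 0 - v 1, -v 0 + 2 * v 1] ∧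
      (torusRep (mk [(1, true)])).1 *ᵥ v = ![2 * v 0 - v 1, -v 0 + v 1] ∧
      (torusRep (mk [(1, false)])).1 *ᵥ v = ![v 0 + v 1, v 0 + 2 * v 1] := by
  refine ⟨?_, ?_, ?_, ?_⟩ <;> simp [torusRep, dotProduct, sub_eq_add_neg]

lemma InArc.torusRep_mulVec {l m : Fin 2 × Bool} (hlm : l.1 = m.1 → l.2 = m.2) {v : Fin 2 → ℤ}
    (hv : InArc m v) : InArc l ((torusRep (mk [l])).1 *ᵥ v) := by
  obtain ⟨h₀, h₀_inv, h₁, h₁_inv⟩ := torusRep_letter_mulVec v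
  obtain ⟨i, b⟩ := l
  obtain ⟨j, d⟩ := m
  fin_cases i <;> cases b <;> fin_cases j <;> cases d <;>
    first
    | exact absurd (hlm rfl) (by decide)
    | simp only [InArc, Fin.zero_eta, Fin.mk_one, h₀, h₀_inv, h₁, h₁_inv, Matrix.cons_val_zero,
        Matrix.cons_val_one] at hv ⊢
      lia

/-- The elements moving the cusp `∞` to a vertex of the fundamental quadrilateral. -/
def cuspTranslators : List (FreeGroup (Fin 2)) := [1, (of 1)⁻¹, (of 0)⁻¹ * (of 1)⁻¹, (of 0)⁻¹]

lemma letter_mul_cuspTranslator : ∀ l : Fin 2 × Bool, ∀ w ∈ cuspTranslators,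
    (∃ w' ∈ cuspTranslators, ∃ j ∈ Finset.Icc (-1 : ℤ) 1, mk [l] * w = w' * torusBoundary ^ j) ∨
      InArc l (cuspVector (mk [l] * w)) := by
  decide

lemma cuspVector_mul_torusBoundary_zpow (u : FreeGroup (Fin 2)) (k : ℤ) :
    cuspVector (u * torusBoundary ^ k) = cuspVector u ∨
      cuspVector (u * torusBoundary ^ k) = -cuspVector u := by
  have hc : cuspVector torusBoundary = -![1, 0] := by decide
  have hc_inv : cuspVector torusBoundary⁻¹ = -![1, 0] := by decide
  refine zpow_induction_right
    (P := fun v => cuspVector (u * v) = cuspVector u ∨ cuspVector (u * v) = -cuspVector u)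
    (by simp) (fun v ih => ?_) (fun v ih => ?_) k
  · rw [← mul_assoc, cuspVector_mul, hc, Matrix.mulVec_neg, ← cuspVector, neg_eq_iff_eq_neg,
      neg_inj]
    exact ih.symm
  · rw [← mul_assoc, cuspVector_mul, hc_inv, Matrix.mulVec_neg, ← cuspVector, neg_eq_iff_eq_neg,
      neg_inj]
    exact ih.symm

/-- As letters are applied, the cusp stays a vertex of the quadrilateral until it falls into the arc
of the last letter; from then on it is driven by ping-pong. -/
lemma exists_cuspTranslator_or_inArc {L : List (Fin 2 × Bool)} (hL : IsReduced L) :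
    (∃ w ∈ cuspTranslators, ∃ k : ℤ, mk L = w * torusBoundary ^ k) ∨
      ∃ l ∈ L.head?, InArc l (cuspVector (mk L)) := by
  induction L with
  | nil => exact .inl ⟨1, by simp [cuspTranslators], 0, by simp [← one_eq_mk]⟩
  | cons l L ih =>
    rw [← List.singleton_append, ← mul_mk]
    obtain ⟨w, hw, k, hk⟩ | ⟨m, hm, hmL⟩ := ih hL.tail
    · rw [hk, ← mul_assoc]
      obtain ⟨w', hw', j, -, hj⟩ | harc := letter_mul_cuspTranslator l w hw
      · exact .inl ⟨w', hw', j + k, by rw [hj, mul_assoc, zpow_add]⟩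
      · refine .inr ⟨l, rfl, ?_⟩
        obtain h | h := cuspVector_mul_torusBoundary_zpow (mk [l] * w) k <;> rw [h]
        exacts [harc, harc.neg]
    · obtain ⟨M, rfl⟩ := List.head?_eq_some_iff.1 hm
      exact .inr ⟨l, rfl, cuspVector_mul _ _ ▸ hmL.torusRep_mulVec (isReduced_cons_cons.1 hL).1⟩

lemma mem_zpowers_torusBoundary {u : FreeGroup (Fin 2)} (hu : torusRep u 1 0 = 0) :
    u ∈ Subgroup.zpowers torusBoundary := by
  have hvertex : ∀ w ∈ cuspTranslators, cuspVector w 1 = 0 → w = 1 := by decide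
  rw [← cuspVector_apply_one, ← mk_toWord (x := u)] at hu
  obtain ⟨w, hw, k, hk⟩ | ⟨l, -, hl⟩ :=
    exists_cuspTranslator_or_inArc (isReduced_toWord (x := u))
  · have hw₁ : cuspVector w 1 = 0 := by
      rw [hk] at hu
      obtain h | h := cuspVector_mul_torusBoundary_zpow w k <;> simpa [h] using hu
    rw [mk_toWord, hvertex w hw hw₁, one_mul] at hk
    exact ⟨k, hk.symm⟩
  · exact absurd hu hl.apply_one_ne_zero

lemma torusRep_torusBoundary_sq : torusRep (torusBoundary ^ 2) = upperRightHom 12 := by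
  decide

end Torus

section TwistedShift

variable {ι G : Type*} [Group G]

/-- The permutations of `ι × G` acting on each fibre `{i} × G` by a left translation. -/
def fiberwiseMulLeft : (ι → G) →* Equiv.Perm (ι × G) where
  toFun f := Equiv.prodShear (Equiv.refl ι) fun i => Equiv.mulLeft (f i)
  map_one' := by ext <;> simp
  map_mul' f f' := by ext <;> simp

@[simp]
lemma fiberwiseMulLeft_apply (f : ι → G) (x : ι × G) :
    fiberwiseMulLeft f x = (x.1, f x.1 * x.2) := rfl

variable {m : ℕ}

/-- The cyclic shift of `m + 1` copies of `G`, multiplying by `s` on return to the first copy. -/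
def twistedShift (m : ℕ) (s : G) : Equiv.Perm (Fin (m + 1) × G) :=
  fiberwiseMulLeft (Pi.mulSingle 0 s) * (finRotate (m + 1)).prodCongr (Equiv.refl G)

lemma twistedShift_castSucc (s : G) (j : Fin m) (x : G) :
    twistedShift m s (j.castSucc, x) = (j.succ, x) := by
  simp [twistedShift]

lemma twistedShift_last (s : G) (x : G) :
    twistedShift m s (Fin.last m, x) = (0, s * x) := by
  simp [twistedShift]

lemma twistedShift_pow_zero (s : G) (k : Fin (m + 1)) (x : G) :
    (twistedShift m s ^ (k : ℕ)) (0, x) = (k, x) := by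
  induction k using Fin.induction with
  | zero => simp
  | succ k ih =>
    rw [Fin.val_succ, pow_succ', Equiv.Perm.mul_apply, ← Fin.val_castSucc, ih,
      twistedShift_castSucc]

lemma twistedShift_pow_succ_zero (s : G) (x : G) :
    (twistedShift m s ^ (m + 1)) (0, x) = (0, s * x) := by
  have h := twistedShift_pow_zero s (Fin.last m) x
  rw [Fin.val_last] at h
  rw [pow_succ', Equiv.Perm.mul_apply, h, twistedShift_last]

lemma twistedShift_pow_symm (s : G) (k : Fin (m + 1)) (x : G) :
    (twistedShift m s ^ (k : ℕ)).symm (k, x) = (0, x) := by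
  rw [Equiv.symm_apply_eq, twistedShift_pow_zero]

end TwistedShift

lemma prod_ofFn_pow_mul_mul_inv {G : Type*} [Group G] (a r : G) (n : ℕ) :
    (List.ofFn fun k : Fin n => a ^ (k : ℕ) * r * (a ^ (k : ℕ))⁻¹).prod =
      (r * a) ^ n * (a ^ n)⁻¹ := by
  induction n with
  | zero => simp
  | succ n ih =>
    rw [List.ofFn_succ', List.concat_eq_append, List.prod_append]
    simp only [Fin.val_castSucc, ih, Fin.val_last, List.prod_singleton, pow_succ]
    group

namespace SurfaceGroup

variable {g : ℕ} {G : Type*} [Group G]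

/-- The generator `aᵢ` of `Γ_g`, where `i` is counted from `0`. -/
def genA (i : Fin g) : SurfaceGroup g := PresentedGroup.of (i, false)

/-- The generator `bᵢ` of `Γ_g`, where `i` is counted from `0`. -/
def genB (i : Fin g) : SurfaceGroup g := PresentedGroup.of (i, true)

lemma map_surfaceRelator (f : FreeGroup (Fin g × Bool) →* G) :
    f (surfaceRelator g) =
      (List.ofFn fun i => ⁅f (of (i, false)), f (of (i, true))⁆).prod := by
  simp [surfaceRelator, map_list_prod, List.map_ofFn, Function.comp_def, map_commutatorElement]

lemma prod_commutator_gen : (List.ofFn fun i : Fin g => ⁅genA i, genB i⁆).prod = 1 := by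
  rw [← PresentedGroup.one_of_mem (rels := {surfaceRelator g}) rfl]
  exact (map_surfaceRelator _).symm

/-- The universal property of `Γ_g`: elements satisfying its relation are the images of the
generators under a homomorphism. -/
def lift (a b : Fin g → G) (h : (List.ofFn fun i => ⁅a i, b i⁆).prod = 1) :
    SurfaceGroup g →* G :=
  PresentedGroup.toGroup (f := fun x => bif x.2 then b x.1 else a x.1) <| by
    rintro r rfl
    simpa [map_surfaceRelator] using h

section

variable (a b : Fin g → G) (h : (List.ofFn fun i => ⁅a i, b i⁆).prod = 1) (i : Fin g)

@[simp]
lemma lift_genA : lift a b h (genA i) = a i := by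
  simp [lift, genA]

@[simp]
lemma lift_genB : lift a b h (genB i) = b i := by
  simp [lift, genB]

end

lemma closure_genA_genB :
    Subgroup.closure (Set.range genA ∪ Set.range genB : Set (SurfaceGroup g)) = ⊤ := by
  rw [eq_top_iff, ← PresentedGroup.closure_range_of]
  refine Subgroup.closure_mono ?_
  rintro _ ⟨⟨i, _ | _⟩, rfl⟩
  exacts [.inl ⟨i, rfl⟩, .inr ⟨i, rfl⟩]

lemma hom_ext {φ ψ : SurfaceGroup g →* G} (hA : ∀ i, φ (genA i) = ψ (genA i))
    (hB : ∀ i, φ (genB i) = ψ (genB i)) : φ = ψ :=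
  PresentedGroup.ext fun ⟨i, b⟩ => by cases b; exacts [hA i, hB i]

lemma commutator_genB_one_genA_one :
    ⁅genB (g := 2) 1, genA (g := 2) 1⁆ = ⁅genA (g := 2) 0, genB (g := 2) 0⁆ := by
  have h : ⁅genA (g := 2) 0, genB (g := 2) 0⁆ * ⁅genA (g := 2) 1, genB (g := 2) 1⁆ = 1 := by
    simpa [List.ofFn_succ] using prod_commutator_gen (g := 2)
  rw [← commutatorElement_inv (genA 1), eq_inv_of_mul_eq_one_left h]

/-- The decomposition of the genus two surface along a separating curve into two punctured tori;
the generators of the second one are interchanged to match the orientations of the boundaries. -/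
def toCopyAmalgam : SurfaceGroup 2 →* CopyAmalgam (Fin 2) (Subgroup.zpowers torusBoundary) :=
  lift ![PushoutI.of 0 (of 0), PushoutI.of 1 (of 1)]
      ![PushoutI.of 0 (of 1), PushoutI.of 1 (of 0)] <| by
    have h := CopyAmalgam.of_eq_of (Subgroup.mem_zpowers torusBoundary) (0 : Fin 2) 1
    rw [map_commutatorElement, map_commutatorElement, ← commutatorElement_inv (PushoutI.of 1 _),
      eq_inv_iff_mul_eq_one] at h
    simpa [List.ofFn_succ] using h

/-- The inverse of `toCopyAmalgam`. -/
def ofCopyAmalgam : CopyAmalgam (Fin 2) (Subgroup.zpowers torusBoundary) →* SurfaceGroup 2 :=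
  PushoutI.lift ![FreeGroup.lift ![genA 0, genB 0], FreeGroup.lift ![genB 1, genA 1]]
      ((FreeGroup.lift ![genA 0, genB 0]).comp (Subgroup.subtype _)) <| by
    intro i
    ext ⟨_, k, rfl⟩
    fin_cases i <;> simp [map_commutatorElement, commutator_genB_one_genA_one]

lemma toCopyAmalgam_injective : Function.Injective toCopyAmalgam := by
  have hleft : ofCopyAmalgam.comp toCopyAmalgam = MonoidHom.id (SurfaceGroup 2) := by
    apply hom_ext <;> simp [Fin.forall_fin_two, toCopyAmalgam, ofCopyAmalgam]
  exact Function.LeftInverse.injective (DFunLike.congr_fun hleft)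

lemma exists_hom_freeGroup_ne_one_of_genus_two {γ : SurfaceGroup 2} (hγ : γ ≠ 1) :
    ∃ φ : SurfaceGroup 2 →* FreeGroup (Fin 2), φ γ ≠ 1 := by
  have hcomm : ∀ h ∈ Subgroup.zpowers torusBoundary, Commute (torusBoundary ^ 2) h := by
    rintro _ ⟨k, rfl⟩
    exact ((Commute.refl _).pow_left 2).zpow_right k
  obtain ⟨φ, hφ⟩ := CopyAmalgam.exists_hom_ne_one hcomm (by simp) torusRep_torusBoundary_sq
    (fun _ => mem_zpowers_torusBoundary) ((map_ne_one_iff _ toCopyAmalgam_injective).2 hγ)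
  exact ⟨φ.comp toCopyAmalgam, hφ⟩

/-- The `n`-fold cyclic covering of the genus two surface which unwinds `a₀`: it has one long handle
and `n` translates of the second handle of the base. -/
def cover (n : ℕ) : SurfaceGroup (n + 1) →* SurfaceGroup 2 :=
  lift (Fin.cons (genA 0 ^ n) fun k : Fin n => genA 0 ^ (k : ℕ) * genA 1 * (genA 0 ^ (k : ℕ))⁻¹)
      (Fin.cons (genB 0) fun k : Fin n => genA 0 ^ (k : ℕ) * genB 1 * (genA 0 ^ (k : ℕ))⁻¹) <| by
    have hconj : ⁅genA (g := 2) 1, genB (g := 2) 1⁆ * genA 0 = genB 0 * genA 0 * (genB 0)⁻¹ := by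
      rw [← commutatorElement_inv, commutator_genB_one_genA_one, commutatorElement_inv,
        commutatorElement_def, inv_mul_cancel_right]
    simp only [List.ofFn_succ, Fin.cons_zero, Fin.cons_succ, List.prod_cons,
      ← conjugate_commutatorElement, prod_ofFn_pow_mul_mul_inv, hconj, conj_pow]
    rw [commutatorElement_def]
    group

section

variable (m : ℕ)

/-- The boundaries of the translates of the second handle in the cyclic cover. -/
def handle (k : Fin (m + 1)) : SurfaceGroup (m + 2) :=
  ⁅genA k.succ, genB k.succ⁆

lemma partialProd_handle_last :
    Fin.partialProd (handle m) (Fin.last _) = ⁅genA (g := m + 2) 0, genB (g := m + 2) 0⁆⁻¹ := by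
  have h := prod_commutator_gen (g := m + 2)
  rw [List.ofFn_succ, List.prod_cons, mul_eq_one_iff_inv_eq] at h
  rw [h, Fin.partialProd, Fin.val_last, List.take_of_length_le List.length_ofFn.le]
  rfl

/-- The monodromy along `b₀`: its value on the `k`-th sheet takes into account the boundaries of the
translates that a lift of `b₀` is pushed across on the way to the `0`-th sheet. -/
def monodromyB (k : Fin (m + 1)) : SurfaceGroup (m + 2) :=
  (Fin.partialProd (handle m) k.castSucc)⁻¹ * genB 0

lemma monodromyB_zero : monodromyB m 0 = genB 0 := by
  simp [monodromyB]

lemma monodromyB_succ (k : Fin m) :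
    monodromyB m k.succ = (handle m k.castSucc)⁻¹ * monodromyB m k.castSucc := by
  rw [monodromyB, Fin.castSucc_succ, Fin.partialProd_succ, mul_inv_rev, mul_assoc]
  rfl

lemma handle_last_inv_mul_monodromyB_last :
    (handle m (Fin.last m))⁻¹ * monodromyB m (Fin.last m) = genA 0 * genB 0 * (genA 0)⁻¹ := by
  rw [monodromyB, ← mul_assoc, ← mul_inv_rev, ← Fin.partialProd_succ, Fin.succ_last,
    partialProd_handle_last, inv_inv, commutatorElement_def, inv_mul_cancel_right]

lemma fiberwiseMulLeft_monodromyB_mul_twistedShift :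
    fiberwiseMulLeft (monodromyB m) * twistedShift m (genA 0)⁻¹ =
      twistedShift m (genA 0)⁻¹ * fiberwiseMulLeft ((handle m)⁻¹ * monodromyB m) := by
  ext1 ⟨k, κ⟩
  cases k using Fin.lastCases with
  | last =>
    simp [-map_mul, -map_inv, twistedShift_last, monodromyB_zero,
      handle_last_inv_mul_monodromyB_last, mul_assoc]
  | cast k =>
    simp [-map_mul, -map_inv, twistedShift_castSucc, monodromyB_succ]

/-- The action of `Γ₂` on `m + 1` copies of `Γ_{m+2}` which is induced from the left regular action
of `Γ_{m+2}` along `cover (m + 1)`. -/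
def coverMonodromy : SurfaceGroup 2 →* Equiv.Perm (Fin (m + 1) × SurfaceGroup (m + 2)) :=
  lift ![(twistedShift m (genA 0)⁻¹)⁻¹, fiberwiseMulLeft fun k => genA k.succ]
    ![fiberwiseMulLeft (monodromyB m), fiberwiseMulLeft fun k => genB k.succ] <| by
    have hB : ⁅(twistedShift m (genA (g := m + 2) 0)⁻¹)⁻¹, fiberwiseMulLeft (monodromyB m)⁆ =
        (fiberwiseMulLeft (handle m))⁻¹ := by
      rw [commutatorElement_def, inv_inv, mul_assoc _ (fiberwiseMulLeft _),
        fiberwiseMulLeft_monodromyB_mul_twistedShift, inv_mul_cancel_left, map_mul, map_inv,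
        mul_inv_cancel_right]
    have hA : ⁅fiberwiseMulLeft fun k : Fin (m + 1) => genA (g := m + 2) k.succ,
        fiberwiseMulLeft fun k => genB k.succ⁆ = fiberwiseMulLeft (handle m) := by
      rw [← map_commutatorElement]
      rfl
    simp [List.ofFn_succ, hA, hB]

lemma coverMonodromy_cover_apply (γ κ : SurfaceGroup (m + 2)) :
    coverMonodromy m (cover (m + 1) γ) (0, κ) = (0, γ * κ) := by
  have hγ : γ ∈ Subgroup.closure (Set.range genA ∪ Set.range genB) := by simp [closure_genA_genB]
  induction hγ using Subgroup.closure_induction generalizing κ with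
  | one => simp
  | mul γ γ' _ _ ih ih' =>
    rw [map_mul, map_mul, Equiv.Perm.mul_apply, ih', ih, mul_assoc]
  | inv γ _ ih =>
    rw [map_inv, map_inv, Equiv.Perm.inv_eq_iff_eq, ih, mul_inv_cancel_left]
  | mem γ hγ =>
    obtain ⟨i, rfl⟩ | ⟨i, rfl⟩ := hγ <;> cases i using Fin.cases <;>
      simp [cover, coverMonodromy, monodromyB_zero, twistedShift_pow_zero, twistedShift_pow_symm,
        twistedShift_pow_succ_zero, Equiv.symm_apply_eq]

lemma cover_succ_injective : Function.Injective (cover (m + 1)) := by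
  refine (injective_iff_map_eq_one _).2 fun γ hγ => ?_
  simpa [hγ] using (coverMonodromy_cover_apply m γ 1).symm

end

lemma exists_hom_freeGroup_ne_one {g : ℕ} (hg : 2 ≤ g) {γ : SurfaceGroup g} (hγ : γ ≠ 1) :
    ∃ φ : SurfaceGroup g →* FreeGroup (Fin 2), φ γ ≠ 1 := by
  obtain ⟨m, rfl⟩ := Nat.exists_eq_add_of_le' hg
  obtain ⟨φ, hφ⟩ := exists_hom_freeGroup_ne_one_of_genus_two
    ((map_ne_one_iff _ (cover_succ_injective m)).2 hγ)
  exact ⟨φ.comp (cover (m + 1)), hφ⟩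

end SurfaceGroup

end

/-- If `a, b ∈ Γ_g` do not commute, there is a homomorphism `φ : Γ_g → F₂` to the free
group on two generators with `φ(a)φ(b) ≠ φ(b)φ(a)`. -/
theorem exists_hom_to_free_group_noncommuting (g : ℕ) (hg : 2 ≤ g)
    (a b : SurfaceGroup g) (hab : a * b ≠ b * a) :
    ∃ φ : SurfaceGroup g →* FreeGroup (Fin 2), φ a * φ b ≠ φ b * φ a := by
  obtain ⟨φ, hφ⟩ := SurfaceGroup.exists_hom_freeGroup_ne_one hg
    (mt commutatorElement_eq_one_iff_mul_comm.1 hab)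
  refine ⟨φ, fun h => hφ ?_⟩
  rwa [map_commutatorElement, commutatorElement_eq_one_iff_mul_comm]
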